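/- For every infinite cardinal λ there exists an ordinal α such that the unitization over ℝ of the non-unital Banach algebra K(C([0,α],ℝ)) of compact operators on the Banach space C([0,α],ℝ) has a dense subset of cardinality at most 2^λ and, for every real Banach space E having a dense subset of cardinality at most λ, this unitization is not isomorphic as a ring to the Calkin algebra B(E)/K(E). -/

import Mathlib

open Cardinal

set_option synthInstance.maxHeartbeats 1000000

/-- The two-sided ideal of compact operators in `B(E)`, the algebra of bounded linear
operators on `E`. -/
def compactIdeal (𝕜 : Type*) [NontriviallyNormedField 𝕜]
    (E : Type*) [NormedAddCommGroup E] [NormedSpace 𝕜 E] : TwoSidedIdeal (E →L[𝕜] E) :=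
  TwoSidedIdeal.mk' {f : E →L[𝕜] E | IsCompactOperator f}
    isCompactOperator_zero
    (fun hf hg => hf.add hg)
    (fun hf => hf.neg)
    (fun {f _} hg => hg.clm_comp f)
    (fun {_ g} hf => hf.comp_clm g)

/-- The Calkin algebra `B(E)/K(E)`, as a quotient ring. -/
def Calkin (𝕜 : Type*) [NontriviallyNormedField 𝕜]
    (E : Type*) [NormedAddCommGroup E] [NormedSpace 𝕜 E] : Type _ :=
  (compactIdeal 𝕜 E).ringCon.Quotient

noncomputable instance (𝕜 : Type*) [NontriviallyNormedField 𝕜]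
    (E : Type*) [NormedAddCommGroup E] [NormedSpace 𝕜 E] : Ring (Calkin 𝕜 E) :=
  inferInstanceAs (Ring (compactIdeal 𝕜 E).ringCon.Quotient)

/-- The non-unital algebra `K(E)` of compact operators on `E`. -/
def compactOperators (𝕜 : Type*) [NontriviallyNormedField 𝕜]
    (E : Type*) [NormedAddCommGroup E] [NormedSpace 𝕜 E] :
    NonUnitalSubalgebra 𝕜 (E →L[𝕜] E) where
  carrier := {f : E →L[𝕜] E | IsCompactOperator f}
  add_mem' := fun hf hg => hf.add hg
  zero_mem' := isCompactOperator_zero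
  smul_mem' := fun c _ hf => hf.smul c
  mul_mem' := fun {_ g} hf _ => hf.comp_clm g

/-- The ordinal interval `[0, α]`, i.e. the set of ordinals `≤ α`, with its (order) topology,
is a compact space. -/
instance (α : Ordinal.{u}) : CompactSpace (Set.Iic α) := by
  rw [← isCompact_iff_compactSpace, ← Set.Icc_bot]
  exact isCompact_Icc

/-!
The proof is a counting argument with `κ = 2 ^ lam`. A Banach space with a dense family indexed by
`lam` is determined up to isometric isomorphism by the distances within that family (Mazur–Ulam), so
only `κ` Calkin algebras have to be avoided. It therefore suffices that, for each ring `B`, the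
ordinals `α < κ⁺` for which `B` is isomorphic to the unitization of `K(C([0,α]))` are bounded
below `κ⁺`.

By an Eidelheit-type argument, a ring isomorphism between two such unitizations is implemented by an
isomorphism `X = C([0,α₀]) ≃ C([0,α])`. The dual of `X` has at most `κ` elements and, `[0,α₀]` being
scattered, each of its bounded sets has weak-* relatively open parts of small norm diameter. The
functionals on `X` obtained by pulling back evaluations at nonzero multiples of `ω ^ θ` form
families that decrease with `θ`, hence stabilise before `κ⁺`. In a stable family each functional is
a weak-* limit of others at distance bounded below, which is impossible unless it is empty.
-/

open Set Filter Topology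

theorem exists_mem_Ico_forall_mem_of_mem_nhds {K : Type*} [LinearOrder K] [TopologicalSpace K]
    [OrderTopology K] {b : K} {U : Set K} (hU : U ∈ 𝓝 b) {c : WithBot K}
    (hc : c < b) : ∃ d ∈ Ico c b, ∀ x : K, d < x → x ≤ b → x ∈ U := by
  by_cases hb : ∃ a, a < b
  · obtain ⟨a, hab, ha⟩ := exists_Ioc_subset_of_mem_nhds hU hb
    refine ⟨max a c, ⟨le_max_right _ _, max_lt (WithBot.coe_lt_coe.2 hab) hc⟩, fun x hx hxb => ?_⟩
    exact ha ⟨WithBot.coe_lt_coe.1 ((le_max_left _ _).trans_lt hx), hxb⟩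
  · refine ⟨c, ⟨le_rfl, hc⟩, fun x _ hxb => ?_⟩
    rw [hxb.eq_of_not_lt fun h => hb ⟨x, h⟩]
    exact mem_of_mem_nhds hU

section WellOrder

variable {K : Type*} [LinearOrder K] [WellFoundedLT K] [TopologicalSpace K] [OrderTopology K]

theorem isClopen_Iic_of_wellFoundedLT (b : K) : IsClopen (Iic b) := by
  refine ⟨isClosed_Iic, ?_⟩
  let : SuccOrder K := SuccOrder.ofLinearWellFoundedLT K
  by_cases hb : IsMax b
  · rw [show Iic b = Set.univ from eq_univ_of_forall fun x => hb.isTop x]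
    exact isOpen_univ
  · rw [← Order.Iio_succ_of_not_isMax hb]
    exact isOpen_Iio

theorem isClopen_setOf_coe_le (d : WithBot K) : IsClopen {x : K | (x : WithBot K) ≤ d} := by
  induction d with
  | bot => simpa using isClopen_empty
  | coe b => simpa [Iic] using isClopen_Iic_of_wellFoundedLT b

/-- The indicator function of the clopen initial segment `{x | x ≤ d}` of a well-ordered space.
Letting `d` range over `WithBot K` includes the empty segment, so that the minimum of `K` needs no
separate treatment in inductions. -/
noncomputable def iicIndicator (d : WithBot K) : C(K, ℝ) :=
  ⟨{x : K | (x : WithBot K) ≤ d}.indicator 1,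
    (isClopen_setOf_coe_le d).continuous_indicator continuous_one⟩

theorem iicIndicator_of_le {d : WithBot K} {x : K} (h : (x : WithBot K) ≤ d) :
    iicIndicator d x = 1 :=
  indicator_of_mem (s := {x : K | (x : WithBot K) ≤ d}) h 1

theorem iicIndicator_of_lt {d : WithBot K} {x : K} (h : d < x) : iicIndicator d x = 0 :=
  indicator_of_notMem (s := {x : K | (x : WithBot K) ≤ d}) h.not_ge 1

theorem iicIndicator_bot : iicIndicator (⊥ : WithBot K) = 0 := by
  ext x
  exact iicIndicator_of_lt (WithBot.bot_lt_coe x)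

theorem iicIndicator_mul_of_le {c d : WithBot K} (h : c ≤ d) :
    iicIndicator c * iicIndicator d = iicIndicator c := by
  ext x
  rcases le_or_gt (x : WithBot K) c with hx | hx
  · simp [iicIndicator_of_le hx, iicIndicator_of_le (hx.trans h)]
  · simp [iicIndicator_of_lt hx]

theorem exists_iicIndicator_eq_one [CompactSpace K] :
    ∃ d : WithBot K, iicIndicator d = 1 := by
  cases isEmpty_or_nonempty K
  · exact ⟨⊥, ContinuousMap.ext isEmptyElim⟩
  · obtain ⟨m, -, hm⟩ := isCompact_univ.exists_isGreatest (univ_nonempty (α := K))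
    exact ⟨m, ContinuousMap.ext fun x => iicIndicator_of_le (WithBot.coe_le_coe.2 (hm trivial))⟩

end WellOrder

section Compact

variable {K : Type*} [LinearOrder K] [WellFoundedLT K] [TopologicalSpace K] [OrderTopology K]
  [CompactSpace K]

theorem norm_iicIndicator_le (d : WithBot K) : ‖iicIndicator d‖ ≤ 1 := by
  refine (ContinuousMap.norm_le _ zero_le_one).2 fun x => ?_
  rcases le_or_gt (x : WithBot K) d with hx | hx
  · simp [iicIndicator_of_le hx]
  · simp [iicIndicator_of_lt hx]

theorem norm_iicIndicator_sub_le (c d : WithBot K) : ‖iicIndicator d - iicIndicator c‖ ≤ 1 := by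
  refine (ContinuousMap.norm_le _ zero_le_one).2 fun x => ?_
  rcases le_or_gt (x : WithBot K) c with hc | hc <;> rcases le_or_gt (x : WithBot K) d with hd | hd
  all_goals simp [iicIndicator_of_le, iicIndicator_of_lt, hc, hd]

theorem iicIndicator_smul_mem_closure {Y : Type*} [NormedAddCommGroup Y] [NormedSpace ℝ Y]
    (F : C(K, Y)) {b : K} (hF : F b = 0) {c : WithBot K} (hc : c < b) :
    iicIndicator (b : WithBot K) • F ∈
      closure ((fun d : WithBot K => iicIndicator d • F) '' Ico c b) := by
  refine Metric.mem_closure_iff.2 fun ε hε => ?_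
  have hU : {x | ‖F x‖ < ε} ∈ 𝓝 b :=
    (isOpen_lt F.continuous.norm continuous_const).mem_nhds (by simpa [hF] using hε)
  obtain ⟨d, hd, hdU⟩ := exists_mem_Ico_forall_mem_of_mem_nhds hU hc
  refine ⟨_, mem_image_of_mem _ hd, (ContinuousMap.dist_lt_iff hε).2 fun x => ?_⟩
  rcases le_or_gt (x : WithBot K) d with hxd | hxd
  · simpa [iicIndicator_of_le hxd, iicIndicator_of_le (hxd.trans hd.2.le)] using hε
  · rcases le_or_gt (x : WithBot K) b with hxb | hxb
    · simpa [iicIndicator_of_lt hxd, iicIndicator_of_le hxb]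
        using hdU x hxd (WithBot.coe_le_coe.1 hxb)
    · simpa [iicIndicator_of_lt hxd, iicIndicator_of_lt hxb] using hε

theorem topologicalClosure_span_iicIndicator_smul_const (Y : Type*) [NormedAddCommGroup Y]
    [NormedSpace ℝ Y] :
    (Submodule.span ℝ (range fun p : WithBot K × Y =>
      iicIndicator p.1 • ContinuousMap.const K p.2)).topologicalClosure = ⊤ := by
  set S := (Submodule.span ℝ (range fun p : WithBot K × Y =>
    iicIndicator p.1 • ContinuousMap.const K p.2)).topologicalClosure
  have const_mem (d : WithBot K) (y : Y) : iicIndicator d • ContinuousMap.const K y ∈ S :=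
    Submodule.le_topologicalClosure _ (Submodule.subset_span ⟨(d, y), rfl⟩)
  have smul_mem (F : C(K, Y)) (d : WithBot K) : iicIndicator d • F ∈ S := by
    induction d using WellFoundedLT.induction with
    | ind d ih =>
    induction d with
    | bot => simp [iicIndicator_bot]
    | coe b =>
      have sub_mem (d : WithBot K) (hd : d ∈ Ico ⊥ (b : WithBot K)) :
          iicIndicator d • (F - ContinuousMap.const K (F b)) ∈ S := by
        rw [smul_sub]
        exact S.sub_mem (ih d hd.2) (const_mem d _)
      have := closure_minimal (image_subset_iff.2 sub_mem) (Submodule.isClosed_topologicalClosure _)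
        (iicIndicator_smul_mem_closure (F - ContinuousMap.const K (F b)) (by simp)
          (WithBot.bot_lt_coe b))
      rw [smul_sub] at this
      exact (S.sub_mem_iff_left (const_mem b _)).1 this
  obtain ⟨d, hd⟩ := exists_iicIndicator_eq_one (K := K)
  exact eq_top_iff.2 fun F _ => by simpa [hd] using smul_mem F d

end Compact

section FragmentableDual

theorem opNorm_le_of_forall_apply_le {X : Type*} [NormedAddCommGroup X] [NormedSpace ℝ X]
    {φ : StrongDual ℝ X} {C : ℝ} (h : ∀ x, ‖x‖ ≤ 1 → φ x ≤ C) : ‖φ‖ ≤ C := by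
  have hC : 0 ≤ C := by simpa using h 0
  refine φ.opNorm_le_of_unit_norm hC fun x hx => abs_le.2 ⟨?_, h x hx.le⟩
  have := h (-x) (by rw [norm_neg, hx])
  rw [map_neg] at this
  linarith

theorem exists_lt_apply_of_lt_norm {X : Type*} [NormedAddCommGroup X] [NormedSpace ℝ X]
    {φ : StrongDual ℝ X} {r : ℝ} (h : r < ‖φ‖) : ∃ x, ‖x‖ ≤ 1 ∧ r < φ x := by
  contrapose! h
  exact opNorm_le_of_forall_apply_le h

/-- Evaluation at `x`, as an element of the normed dual of `C(K)`. -/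
noncomputable def pointEval {K : Type*} [TopologicalSpace K] [CompactSpace K] (x : K) :
    StrongDual ℝ C(K, ℝ) :=
  ContinuousMap.evalCLM ℝ x

theorem pointEval_apply {K : Type*} [TopologicalSpace K] [CompactSpace K] (x : K) (f : C(K, ℝ)) :
    pointEval x f = f x := rfl

theorem norm_pointEval_le {K : Type*} [TopologicalSpace K] [CompactSpace K] (x : K) :
    ‖pointEval x‖ ≤ 1 :=
  opNorm_le_of_forall_apply_le fun f hf => (le_abs_self _).trans ((f.norm_coe_le_norm x).trans hf)

variable {K : Type*} [LinearOrder K] [WellFoundedLT K] [TopologicalSpace K] [OrderTopology K]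
  [CompactSpace K]

/-- The projection of `C(K)` onto the functions vanishing outside the initial segment
`{x | x ≤ d}`. -/
noncomputable def iicProj (d : WithBot K) : C(K, ℝ) →L[ℝ] C(K, ℝ) :=
  ContinuousLinearMap.mul ℝ C(K, ℝ) (iicIndicator d)

theorem iicProj_apply (d : WithBot K) (f : C(K, ℝ)) : iicProj d f = iicIndicator d * f := rfl

theorem iicProj_bot : iicProj (⊥ : WithBot K) = 0 := by
  ext f : 1
  simp [iicProj_apply, iicIndicator_bot]

theorem exists_iicProj_eq_id : ∃ d : WithBot K, iicProj d = .id ℝ C(K, ℝ) := by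
  obtain ⟨d, hd⟩ := exists_iicIndicator_eq_one (K := K)
  exact ⟨d, ContinuousLinearMap.ext fun f => by simp [iicProj_apply, hd]⟩

theorem norm_iicProj_le (d : WithBot K) : ‖iicProj d‖ ≤ 1 :=
  (ContinuousLinearMap.opNorm_mul_apply_le ℝ C(K, ℝ) _).trans (norm_iicIndicator_le d)

-- A functional has total mass at least the sum of its masses on disjoint clopen pieces; here `f`
-- detects part of the mass on `{x | x ≤ c}`.
theorem norm_comp_iicProj_sub_le (μ : StrongDual ℝ C(K, ℝ)) {c d : WithBot K} (hcd : c ≤ d)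
    {f : C(K, ℝ)} (hf : ‖f‖ ≤ 1) :
    ‖μ ∘L (iicProj d - iicProj c)‖ ≤ ‖μ ∘L iicProj d‖ - μ (iicProj c f) := by
  refine opNorm_le_of_forall_apply_le fun g hg => ?_
  set p := iicIndicator c * f
  set q := (iicIndicator d - iicIndicator c) * g
  have hcc : iicIndicator c * iicIndicator c = iicIndicator c := iicIndicator_mul_of_le le_rfl
  have hdd : iicIndicator d * iicIndicator d = iicIndicator d := iicIndicator_mul_of_le le_rfl
  have hcd' : iicIndicator c * iicIndicator d = iicIndicator c := iicIndicator_mul_of_le hcd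
  have hpq : p * q = 0 := by linear_combination (f * g) * (hcd' - hcc)
  have hp : ‖p‖ ≤ 1 :=
    (norm_mul_le _ _).trans (mul_le_one₀ (norm_iicIndicator_le c) (norm_nonneg f) hf)
  have hq : ‖q‖ ≤ 1 :=
    (norm_mul_le _ _).trans (mul_le_one₀ (norm_iicIndicator_sub_le c d) (norm_nonneg g) hg)
  have hd : iicIndicator d * (p + q) = p + q := by
    linear_combination (f - g) * hcd' + g * hdd
  have key : μ (p + q) ≤ ‖μ ∘L iicProj d‖ := by
    have := (μ ∘L iicProj d).unit_le_opNorm (p + q)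
      (by rw [ContinuousMap.norm_add_eq_max hpq]; exact max_le hp hq)
    rw [ContinuousLinearMap.comp_apply, iicProj_apply, hd] at this
    exact (le_abs_self _).trans this
  have hq' : (μ ∘L (iicProj d - iicProj c)) g = μ q := by
    simp [iicProj_apply, q, sub_mul]
  rw [hq', iicProj_apply, le_sub_iff_add_le', ← map_add]
  exact key

theorem exists_slice_norm_comp_iicProj_sub_le {P : Set (StrongDual ℝ C(K, ℝ))} (hP : P.Nonempty)
    (hPb : Bornology.IsBounded P) (b : K) {η : ℝ} (hη : 0 < η) :
    ∃ c < (b : WithBot K), ∃ (f : C(K, ℝ)) (r : ℝ), (∃ μ ∈ P, r < μ f) ∧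
      ∀ μ ∈ P, r < μ f → ∀ d ∈ Ico c (b : WithBot K), ‖μ ∘L (iicProj d - iicProj c)‖ ≤ η := by
  let S : Set ℝ := {s | ∃ μ ∈ P, ∃ d < (b : WithBot K), ‖μ ∘L iicProj d‖ = s}
  have hSne : S.Nonempty :=
    let ⟨μ, hμ⟩ := hP
    ⟨_, μ, hμ, ⊥, WithBot.bot_lt_coe b, rfl⟩
  obtain ⟨M, hM⟩ := hPb.exists_norm_le
  have hSb : BddAbove S := by
    refine ⟨M, ?_⟩
    rintro _ ⟨μ, hμ, d, -, rfl⟩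
    calc ‖μ ∘L iicProj d‖ ≤ ‖μ‖ * ‖iicProj d‖ := μ.opNorm_comp_le _
      _ ≤ ‖μ‖ := mul_le_of_le_one_right (norm_nonneg μ) (norm_iicProj_le d)
      _ ≤ M := hM μ hμ
  obtain ⟨_, ⟨μ₀, hμ₀, c, hc, rfl⟩, hμ₀c⟩ := exists_lt_of_lt_csSup hSne (sub_lt_self (sSup S) hη)
  obtain ⟨f, hf, hμ₀f⟩ := exists_lt_apply_of_lt_norm hμ₀c
  refine ⟨c, hc, iicProj c f, _, ⟨μ₀, hμ₀, hμ₀f⟩, fun μ hμ hμf d hd => ?_⟩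
  have hsplit := norm_comp_iicProj_sub_le μ hd.1 hf
  have hsup := le_csSup hSb ⟨μ, hμ, d, hd.2, rfl⟩
  linarith

/-- The error of replacing `g` by the constant `g b` on the interval `{x | c < x ∧ x ≤ b}`. -/
noncomputable def iocRemainder (c : WithBot K) (b : K) : C(K, ℝ) →L[ℝ] C(K, ℝ) :=
  iicProj b - iicProj c -
    (pointEval b).smulRight (iicIndicator (b : WithBot K) - iicIndicator c)

theorem iocRemainder_apply (c : WithBot K) (b : K) (g : C(K, ℝ)) :
    iocRemainder c b g =
      iicIndicator (b : WithBot K) • (g - ContinuousMap.const K (g b)) -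
        iicIndicator c • (g - ContinuousMap.const K (g b)) := by
  have hconst : ContinuousMap.const K (g b) = g b • (1 : C(K, ℝ)) := by ext; simp
  simp only [iocRemainder, sub_apply, iicProj_apply, ContinuousLinearMap.smulRight_apply,
    pointEval_apply, hconst, smul_eq_mul, mul_sub, mul_smul_comm, mul_one, smul_sub]
  abel

theorem comp_iicProj_eq_add (μ : StrongDual ℝ C(K, ℝ)) (c : WithBot K) (b : K) :
    μ ∘L iicProj b = μ ∘L iicProj c + μ ∘L iocRemainder c b +
      μ (iicIndicator (b : WithBot K) - iicIndicator c) • pointEval b := by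
  ext g
  simp only [iocRemainder, ContinuousLinearMap.comp_apply, add_apply, smul_apply, sub_apply,
    map_sub, ContinuousLinearMap.smulRight_apply, map_smul, pointEval_apply,
    smul_eq_mul]
  ring

theorem norm_comp_iocRemainder_le {μ : StrongDual ℝ C(K, ℝ)} {c : WithBot K} {b : K}
    (hc : c < b) {η : ℝ} (h : ∀ d ∈ Ico c (b : WithBot K), ‖μ ∘L (iicProj d - iicProj c)‖ ≤ η) :
    ‖μ ∘L iocRemainder c b‖ ≤ 2 * η := by
  refine opNorm_le_of_forall_apply_le fun g hg => ?_
  rw [ContinuousLinearMap.comp_apply, iocRemainder_apply]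
  set g₀ : C(K, ℝ) := g - ContinuousMap.const K (g b) with hg₀_def
  have hg₀ : ‖g₀‖ ≤ 2 := by
    have hgb : ‖ContinuousMap.const K (g b)‖ ≤ 1 :=
      (ContinuousMap.norm_le _ zero_le_one).2 fun _ => (g.norm_coe_le_norm b).trans hg
    linarith [norm_sub_le g (ContinuousMap.const K (g b))]
  have hsub : (fun d : WithBot K => iicIndicator d • g₀) '' Ico c b ⊆
      {f | μ (f - iicIndicator c • g₀) ≤ 2 * η} := by
    rintro _ ⟨d, hd, rfl⟩
    have := (μ ∘L (iicProj d - iicProj c)).le_of_opNorm_le_of_le (h d hd) hg₀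
    rw [mul_comm 2 η]
    exact (le_abs_self _).trans this
  have hclosed : IsClosed {f | μ (f - iicIndicator c • g₀) ≤ 2 * η} :=
    isClosed_le (by fun_prop) continuous_const
  exact closure_minimal hsub hclosed (iicIndicator_smul_mem_closure g₀ (by simp [hg₀_def]) hc)

theorem topologicalClosure_span_range_pointEval :
    (Submodule.span ℝ (range (pointEval (K := K)))).topologicalClosure = ⊤ := by
  set S := (Submodule.span ℝ (range (pointEval (K := K)))).topologicalClosure
  have comp_mem (μ : StrongDual ℝ C(K, ℝ)) (d : WithBot K) : μ ∘L iicProj d ∈ S := by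
    induction d using WellFoundedLT.induction with
    | ind d ih =>
    induction d with
    | bot => simp [iicProj_bot]
    | coe b =>
      have hS : IsClosed (S : Set (StrongDual ℝ C(K, ℝ))) :=
        Submodule.isClosed_topologicalClosure _
      refine hS.closure_subset
        ((SeminormedAddCommGroup.mem_closure_iff (E := StrongDual ℝ C(K, ℝ))).2 fun ε hε => ?_)
      obtain ⟨c, hc, f, r, ⟨ν, hν, hνf⟩, hc_le⟩ := exists_slice_norm_comp_iicProj_sub_le
        (singleton_nonempty μ) Bornology.isBounded_singleton b (η := ε / 3) (by positivity)
      have hμ := hc_le μ rfl (mem_singleton_iff.1 hν ▸ hνf)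
      refine ⟨μ ∘L iicProj c + μ (iicIndicator (b : WithBot K) - iicIndicator c) •
        pointEval b, S.add_mem (ih c hc) (S.smul_mem _ ?_), ?_⟩
      · exact Submodule.le_topologicalClosure _ (Submodule.subset_span ⟨b, rfl⟩)
      · rw [comp_iicProj_eq_add μ c b, add_right_comm, add_sub_cancel_left]
        linarith [norm_comp_iocRemainder_le hc hμ]
  obtain ⟨d, hd⟩ := exists_iicProj_eq_id (K := K)
  exact eq_top_iff.2 fun μ _ => by simpa [hd] using comp_mem μ d

/-- The dual of `X`, with its weak* topology, is fragmented by the norm: every nonempty bounded set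
of functionals has nonempty relatively weak*-open subsets of arbitrarily small norm diameter. For
Banach spaces this is one of the characterisations of Asplund spaces. -/
def HasFragmentableDual (X : Type*) [NormedAddCommGroup X] [NormedSpace ℝ X] : Prop :=
  ∀ P : Set (StrongDual ℝ X), P.Nonempty → Bornology.IsBounded P → ∀ ε > 0,
    ∃ U : Set (WeakDual ℝ X), IsOpen U ∧ (P ∩ StrongDual.toWeakDual ⁻¹' U).Nonempty ∧
      ∀ μ ∈ P ∩ StrongDual.toWeakDual ⁻¹' U, ∀ ν ∈ P ∩ StrongDual.toWeakDual ⁻¹' U, ‖μ - ν‖ ≤ ε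

theorem norm_comp_iicProj_le (μ : StrongDual ℝ C(K, ℝ)) (c : WithBot K) (b : K) :
    ‖μ ∘L iicProj b‖ ≤ ‖μ ∘L iicProj c‖ + ‖μ ∘L iocRemainder c b‖ +
      |μ (iicIndicator (b : WithBot K) - iicIndicator c)| := by
  rw [comp_iicProj_eq_add μ c b]
  refine (norm_add₃_le (E := StrongDual ℝ C(K, ℝ))).trans (add_le_add le_rfl ?_)
  exact (ContinuousLinearMap.opNorm_smul_le _ _).trans
    (mul_le_of_le_one_right (abs_nonneg _) (norm_pointEval_le b))

theorem exists_isOpen_norm_sub_comp_iicProj_le (d : WithBot K)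
    {P : Set (StrongDual ℝ C(K, ℝ))} (hP : P.Nonempty) (hPb : Bornology.IsBounded P) {ε : ℝ}
    (hε : 0 < ε) :
    ∃ U : Set (WeakDual ℝ C(K, ℝ)), IsOpen U ∧ (P ∩ StrongDual.toWeakDual ⁻¹' U).Nonempty ∧
      ∀ μ ∈ P ∩ StrongDual.toWeakDual ⁻¹' U, ∀ ν ∈ P ∩ StrongDual.toWeakDual ⁻¹' U,
        ‖(μ - ν) ∘L iicProj d‖ ≤ ε := by
  induction d using WellFoundedLT.induction generalizing P ε with
  | ind d ih =>
  induction d with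
  | bot =>
    refine ⟨Set.univ, isOpen_univ, by simpa using hP, fun μ _ ν _ =>
      opNorm_le_of_forall_apply_le fun g _ => ?_⟩
    simpa [iicProj_bot] using hε.le
  | coe b =>
    obtain ⟨c, hc, f, r, ⟨μ₁, hμ₁, hμ₁f⟩, hslice⟩ :=
      exists_slice_norm_comp_iicProj_sub_le hP hPb b (η := ε / 8) (by positivity)
    set k := iicIndicator (b : WithBot K) - iicIndicator c
    obtain ⟨U, hU, ⟨μ₀, ⟨hμ₀, hμ₀f⟩, hμ₀U⟩, hdiam⟩ :=
      ih c hc (P := {μ ∈ P | r < μ f}) ⟨μ₁, hμ₁, hμ₁f⟩ (hPb.subset (sep_subset _ _))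
        (ε := ε / 4) (by positivity)
    refine ⟨U ∩ {φ | r < φ f} ∩ {φ | |φ k - μ₀ k| < ε / 8}, ?_,
      ⟨μ₀, hμ₀, ⟨hμ₀U, hμ₀f⟩, by simpa using hε⟩, ?_⟩
    · have heval (g : C(K, ℝ)) : Continuous fun φ : WeakDual ℝ C(K, ℝ) => φ g :=
        WeakDual.eval_continuous g
      exact (hU.inter (isOpen_lt continuous_const (heval f))).inter
        (isOpen_lt ((heval k).sub continuous_const).abs continuous_const)
    · rintro μ ⟨hμ, ⟨hμU, hμf : r < μ f⟩, hμk : |μ k - μ₀ k| < ε / 8⟩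
        ν ⟨hν, ⟨hνU, hνf : r < ν f⟩, hνk : |ν k - μ₀ k| < ε / 8⟩
      have hcut := hdiam μ ⟨⟨hμ, hμf⟩, hμU⟩ ν ⟨⟨hν, hνf⟩, hνU⟩
      have hrem : ‖(μ - ν) ∘L iocRemainder c b‖ ≤ ε / 2 := by
        have hμrem := norm_comp_iocRemainder_le hc (hslice μ hμ hμf)
        have hνrem := norm_comp_iocRemainder_le hc (hslice ν hν hνf)
        rw [ContinuousLinearMap.sub_comp]
        linarith [norm_sub_le (μ ∘L iocRemainder c b) (ν ∘L iocRemainder c b)]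
      have hk : |(μ - ν) k| ≤ ε / 4 := by
        rw [abs_sub_comm] at hνk
        rw [sub_apply]
        linarith [abs_sub_le (μ k) (μ₀ k) (ν k)]
      linarith [norm_comp_iicProj_le (μ - ν) c b]

theorem hasFragmentableDual_continuousMap : HasFragmentableDual C(K, ℝ) := by
  intro P hP hPb ε hε
  obtain ⟨d, hd⟩ := exists_iicProj_eq_id (K := K)
  simpa [hd] using exists_isOpen_norm_sub_comp_iicProj_le d hP hPb hε

end FragmentableDual

section InfiniteDimensional

theorem finite_of_finiteDimensional_continuousMap (K : Type*) [TopologicalSpace K] [T4Space K]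
    [FiniteDimensional ℝ C(K, ℝ)] : Finite K := by
  let eval (x : K) : C(K, ℝ) →ₐ[ℝ] ℝ := ContinuousMap.evalAlgHom ℝ ℝ x
  have eval_injective : Function.Injective fun x => (eval x : C(K, ℝ) →* ℝ) := by
    intro x y hxy
    by_contra hne
    obtain ⟨f, hfx, hfy, -⟩ := exists_continuous_zero_one_of_isClosed isClosed_singleton
      isClosed_singleton (disjoint_singleton.2 hne)
    have : f x = f y := DFunLike.congr_fun hxy f
    simp [hfx rfl, hfy rfl] at this
  have hli : LinearIndependent ℝ fun x => (eval x).toLinearMap :=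
    .of_comp (LinearMap.ltoFun ℝ C(K, ℝ) ℝ ℝ)
      ((linearIndependent_monoidHom C(K, ℝ) ℝ).comp _ eval_injective)
  exact hli.finite

theorem one_notMem_compactOperators {X : Type*} [NormedAddCommGroup X] [NormedSpace ℝ X]
    (hX : ¬FiniteDimensional ℝ X) : 1 ∉ compactOperators ℝ X :=
  fun h => hX (isCompactOperator_id_iff_finiteDimensional.1 h)

end InfiniteDimensional

section Cardinality

universe v

variable {κ : Cardinal.{v}}

theorem mk_le_power_aleph0_of_dense {Z : Type v} [TopologicalSpace Z] [FrechetUrysohnSpace Z]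
    [T2Space Z] {s : Set Z} (hs : Dense s) : #Z ≤ #s ^ ℵ₀ := by
  have hseq (z : Z) : ∃ a : ℕ → s, Tendsto (fun n => (a n : Z)) atTop (𝓝 z) := by
    obtain ⟨a, ha, hlim⟩ := mem_closure_iff_seq_limit.1 (hs z)
    exact ⟨fun n => ⟨a n, ha n⟩, hlim⟩
  choose a ha using hseq
  have a_injective : Function.Injective a := fun z w h =>
    tendsto_nhds_unique (ha z) (h ▸ ha w)
  simpa using mk_le_of_injective a_injective

theorem mk_span_real_le {V : Type v} [AddCommGroup V] [Module ℝ V] (h𝔠 : 𝔠 ≤ κ) {s : Set V}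
    (hs : #s ≤ κ) : #(Submodule.span ℝ s) ≤ κ := by
  rcases s.eq_empty_or_nonempty with rfl | ⟨x, hx⟩
  · simpa using one_lt_aleph0.le.trans (aleph0_le_continuum.trans h𝔠)
  have : Nonempty s := ⟨⟨x, hx⟩⟩
  rw [← Subtype.range_coe (s := s), ← Finsupp.range_linearCombination]
  calc #(LinearMap.range (Finsupp.linearCombination ℝ ((↑) : s → V))) ≤ #(s →₀ ℝ) :=
        mk_range_le
    _ ≤ κ := by
        rw [mk_finsupp_lift_of_infinite', mk_real, lift_continuum]
        simpa using ⟨hs, h𝔠⟩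

theorem mk_le_of_topologicalClosure_span_eq_top {V : Type v} [NormedAddCommGroup V]
    [NormedSpace ℝ V] (h𝔠 : 𝔠 ≤ κ) (hκ : κ ^ ℵ₀ ≤ κ) {s : Set V} (hs : #s ≤ κ)
    (hspan : (Submodule.span ℝ s).topologicalClosure = ⊤) : #V ≤ κ :=
  calc #V ≤ #(Submodule.span ℝ s) ^ ℵ₀ :=
        mk_le_power_aleph0_of_dense (Submodule.dense_iff_topologicalClosure_eq_top.2 hspan)
    _ ≤ κ ^ ℵ₀ := power_le_power_right (mk_span_real_le h𝔠 hs)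
    _ ≤ κ := hκ

theorem continuous_pointEval_comp_of_isCompactOperator {K X : Type*} [TopologicalSpace K]
    [CompactSpace K] [NormedAddCommGroup X] [NormedSpace ℝ X] {T : X →L[ℝ] C(K, ℝ)}
    (hT : IsCompactOperator T) : Continuous fun x : K => pointEval x ∘L T := by
  refine continuous_iff_continuousAt.2 fun b => Metric.tendsto_nhds.2 fun ε hε => ?_
  obtain ⟨t, htfin, hcover⟩ := Metric.totallyBounded_iff.1
    (hT.isCompact_closure_image_closedBall 1).totallyBounded (ε / 4) (by positivity)
  have hnear : ∀ᶠ x in 𝓝 b, ∀ y ∈ t, |y x - y b| < ε / 4 :=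
    (eventually_all_finite htfin).2 fun y _ =>
      Metric.tendsto_nhds.1 (y.continuous.tendsto b) _ (by positivity)
  filter_upwards [hnear] with x hx
  rw [dist_eq_norm]
  refine (opNorm_le_of_forall_apply_le (C := 3 * (ε / 4)) fun g hg => ?_).trans_lt (by linarith)
  obtain ⟨y, hy, hgy⟩ := mem_iUnion₂.1 (hcover (subset_closure ⟨g, by simpa using hg, rfl⟩))
  have hTg (z : K) : |T g z - y z| ≤ ε / 4 :=
    ((T g - y).norm_coe_le_norm z).trans (dist_eq_norm (T g) y ▸ (Metric.mem_ball.1 hgy).le)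
  have hsub : (pointEval x ∘L T - pointEval b ∘L T) g = T g x - T g b := rfl
  rw [hsub]
  linarith [(abs_le.1 (hTg x)).2, (abs_le.1 (hTg b)).1, (abs_lt.1 (hx y hy)).2]

theorem mk_isCompactOperator_le (K X : Type v) [TopologicalSpace K] [CompactSpace K]
    [NormedAddCommGroup X] [NormedSpace ℝ X] :
    #{T : X →L[ℝ] C(K, ℝ) | IsCompactOperator T} ≤ #C(K, StrongDual ℝ X) := by
  refine mk_le_of_injective (f := fun T =>
    ⟨_, continuous_pointEval_comp_of_isCompactOperator T.2⟩) fun S T hST => ?_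
  ext g x
  exact DFunLike.congr_fun (DFunLike.congr_fun hST x) g

section WellOrder

variable {K : Type v} [LinearOrder K] [WellFoundedLT K] [TopologicalSpace K] [OrderTopology K]
  [CompactSpace K]

theorem mk_strongDual_continuousMap_le (h𝔠 : 𝔠 ≤ κ) (hκ : κ ^ ℵ₀ ≤ κ) (hK : #K ≤ κ) :
    #(StrongDual ℝ C(K, ℝ)) ≤ κ :=
  mk_le_of_topologicalClosure_span_eq_top h𝔠 hκ (mk_range_le.trans hK)
    topologicalClosure_span_range_pointEval

theorem mk_continuousMap_le (h𝔠 : 𝔠 ≤ κ) (hκ : κ ^ ℵ₀ ≤ κ) (hK : #K ≤ κ) {Y : Type v}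
    [NormedAddCommGroup Y] [NormedSpace ℝ Y] (hY : #Y ≤ κ) : #C(K, Y) ≤ κ := by
  have hκ₀ : ℵ₀ ≤ κ := aleph0_le_continuum.trans h𝔠
  refine mk_le_of_topologicalClosure_span_eq_top h𝔠 hκ (mk_range_le.trans ?_)
    (topologicalClosure_span_iicIndicator_smul_const Y)
  rw [mk_prod, lift_id, lift_id]
  refine mul_le_of_le hκ₀ ?_ hY
  rw [show #(WithBot K) = #K + 1 from mk_option]
  exact add_le_of_le hκ₀ hK (one_lt_aleph0.le.trans hκ₀)

theorem mk_unitization_compactOperators_le (h𝔠 : 𝔠 ≤ κ) (hκ : κ ^ ℵ₀ ≤ κ) (hK : #K ≤ κ) :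
    #(Unitization ℝ (compactOperators ℝ C(K, ℝ))) ≤ κ := by
  have hcomp : #(compactOperators ℝ C(K, ℝ)) ≤ κ := (mk_isCompactOperator_le K C(K, ℝ)).trans
    (mk_continuousMap_le h𝔠 hκ hK (mk_strongDual_continuousMap_le h𝔠 hκ hK))
  rw [(Unitization.uniformEquivProd (𝕜 := ℝ)).toEquiv.cardinal_eq, mk_prod, mk_real,
    lift_continuum, lift_uzero]
  exact mul_le_of_le (aleph0_le_continuum.trans h𝔠) h𝔠 hcomp

end WellOrder

end Cardinality

section Eidelheit

variable {A X Y : Type*} [NonUnitalNonAssocSemiring A] [NormedAddCommGroup X] [NormedSpace ℝ X]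
  [NormedAddCommGroup Y] [NormedSpace ℝ Y]

/-- A faithful representation of a ring by bounded operators on `X` whose image contains every
operator of rank one. Only the ring structure of `A` is involved: the scalar action is recovered
from the rank-one operators. -/
structure IsFaithfulWithRankOne (π : A →ₙ+* (X →L[ℝ] X)) : Prop where
  injective : Function.Injective π
  exists_eq_smulRight (f : StrongDual ℝ X) (x : X) : ∃ a, π a = f.smulRight x

namespace IsFaithfulWithRankOne

variable {π : A →ₙ+* (X →L[ℝ] X)} {σ : A →ₙ+* (Y →L[ℝ] Y)}

/-- The ring element represented by the rank-one operator `f.smulRight x`. -/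
noncomputable def rankOne (hπ : IsFaithfulWithRankOne π) (f : StrongDual ℝ X) (x : X) : A :=
  (hπ.exists_eq_smulRight f x).choose

theorem map_rankOne (hπ : IsFaithfulWithRankOne π) (f : StrongDual ℝ X) (x : X) :
    π (hπ.rankOne f x) = f.smulRight x :=
  (hπ.exists_eq_smulRight f x).choose_spec

theorem rankOne_zero (hπ : IsFaithfulWithRankOne π) (f : StrongDual ℝ X) :
    hπ.rankOne f 0 = 0 :=
  hπ.injective <| by ext; simp [map_rankOne]

theorem rankOne_add (hπ : IsFaithfulWithRankOne π) (f : StrongDual ℝ X) (x y : X) :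
    hπ.rankOne f (x + y) = hπ.rankOne f x + hπ.rankOne f y :=
  hπ.injective <| by ext; simp [map_rankOne]

theorem mul_rankOne (hπ : IsFaithfulWithRankOne π) (a : A) (f : StrongDual ℝ X) (x : X) :
    a * hπ.rankOne f x = hπ.rankOne f (π a x) :=
  hπ.injective <| by ext; simp [map_rankOne]

theorem rankOne_mul_rankOne (hπ : IsFaithfulWithRankOne π) (f g : StrongDual ℝ X) (x y : X) :
    hπ.rankOne f x * hπ.rankOne g y = hπ.rankOne g (f y • x) := by
  rw [mul_rankOne, map_rankOne, ContinuousLinearMap.smulRight_apply]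

-- The idempotent `p := rankOne f x` is minimal: `p * w * p` is a scalar multiple of `p`. Taking
-- for `w` a rank-one element of the second representation makes `σ p` factor through a line.
theorem exists_map_rankOne_eq_smulRight (hπ : IsFaithfulWithRankOne π)
    (hσ : IsFaithfulWithRankOne σ) {f : StrongDual ℝ X} {x : X} (hfx : f x = 1) :
    ∃ (g : StrongDual ℝ Y) (y : Y), g y = 1 ∧ σ (hπ.rankOne f x) = g.smulRight y := by
  set p := hπ.rankOne f x
  have hpp : p * p = p := by rw [hπ.rankOne_mul_rankOne, hfx, one_smul]
  have hp : σ p ≠ 0 := by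
    rw [map_ne_zero_iff σ hσ.injective]
    intro h0
    have : x = 0 := by simpa [p, map_rankOne, hfx] using DFunLike.congr_fun (congrArg π h0) x
    simp [this] at hfx
  obtain ⟨z, hz⟩ := DFunLike.ne_iff.1 hp
  set y := σ p z
  have hpy : σ p y = y := by rw [← mul_apply_eq_comp, ← map_mul, hpp]
  obtain ⟨g, hgy⟩ := SeparatingDual.exists_eq_one (R := ℝ) hz
  set w := hσ.rankOne g y
  have hpwp (c : ℝ) : hπ.rankOne f (c • x) * w * p = hπ.rankOne f ((c * f (π w x)) • x) := by
    simp [p, mul_rankOne, map_rankOne, smul_smul, mul_comm]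
  have hc : f (π w x) ≠ 0 := by
    intro hc
    have hpwp0 := hpwp 1
    rw [hc, mul_zero, zero_smul, one_smul, rankOne_zero] at hpwp0
    have hy0 := DFunLike.congr_fun (congrArg σ hpwp0) y
    simp only [w, map_mul, map_zero, map_rankOne, mul_apply_eq_comp, hpy,
      ContinuousLinearMap.smulRight_apply, hgy, one_smul, zero_apply] at hy0
    exact hz (hpy.symm.trans hy0)
  set s := hπ.rankOne f ((f (π w x))⁻¹ • x)
  have hswp : s * w * p = p := by rw [hpwp, inv_mul_cancel₀ hc, one_smul]
  have hσp : σ p = (g ∘L σ p).smulRight (σ s y) := by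
    ext v
    conv_lhs => rw [← hswp]
    simp [w, map_rankOne]
  have hsy : σ s y = y := by
    have := DFunLike.congr_fun hσp y
    simpa [hpy, hgy] using this.symm
  exact ⟨g ∘L σ p, y, by simp [hpy, hgy], by rwa [hsy] at hσp⟩

/-- The intertwining map `x ↦ σ (f ⊗ x) y` between two representations of the same ring. -/
noncomputable def intertwiner (hπ : IsFaithfulWithRankOne π) (σ : A →ₙ+* (Y →L[ℝ] Y))
    (f : StrongDual ℝ X) (y : Y) : X →+ Y where
  toFun x := σ (hπ.rankOne f x) y
  map_zero' := by rw [rankOne_zero, map_zero, zero_apply]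
  map_add' x x' := by rw [rankOne_add, map_add, add_apply]

theorem intertwiner_apply (hπ : IsFaithfulWithRankOne π) (f : StrongDual ℝ X) (y : Y) (x : X) :
    hπ.intertwiner σ f y x = σ (hπ.rankOne f x) y := rfl

theorem intertwiner_map_apply (hπ : IsFaithfulWithRankOne π) (f : StrongDual ℝ X) (y : Y) (a : A)
    (x : X) : hπ.intertwiner σ f y (π a x) = σ a (hπ.intertwiner σ f y x) := by
  rw [intertwiner_apply, ← mul_rankOne, map_mul, mul_apply_eq_comp, intertwiner_apply]

section

variable {f : StrongDual ℝ X} {x : X} {g : StrongDual ℝ Y} {y : Y}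

theorem intertwiner_smul (hπ : IsFaithfulWithRankOne π) (hfx : f x = 1) (hgy : g y = 1)
    (hσ : σ (hπ.rankOne f x) = g.smulRight y) (c : ℝ) (z : X) :
    hπ.intertwiner σ f y (c • z) = c • hπ.intertwiner σ f y z := by
  let τ (c : ℝ) : ℝ := g (σ (hπ.rankOne f (c • x)) y)
  have hτ (c : ℝ) : σ (hπ.rankOne f (c • x)) y = τ c • y := by
    have hp : hπ.rankOne f x * hπ.rankOne f (c • x) = hπ.rankOne f (c • x) := by
      simp [rankOne_mul_rankOne, hfx]
    conv_lhs => rw [← hp]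
    simp [hσ, τ]
  let τHom : ℝ →+* ℝ := RingHom.mk'
    { toFun := τ
      map_one' := by simp [τ, hσ, hgy]
      map_mul' := fun c d => by
        have hcd : hπ.rankOne f ((c * d) • x) = hπ.rankOne f (d • x) * hπ.rankOne f (c • x) := by
          simp [rankOne_mul_rankOne, hfx, smul_smul]
        calc τ (c * d) = g (σ (hπ.rankOne f (d • x)) (σ (hπ.rankOne f (c • x)) y)) := by
              simp [τ, hcd]
          _ = τ c * τ d := by rw [hτ c, map_smul, hτ d]; simp [hgy] }
    fun c d => by simp [τ, add_smul, rankOne_add]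
  have hτ_id : τ c = c := DFunLike.congr_fun (Subsingleton.elim τHom (RingHom.id ℝ)) c
  have hz : hπ.rankOne f (c • z) = hπ.rankOne f z * hπ.rankOne f (c • x) := by
    simp [rankOne_mul_rankOne, hfx]
  rw [intertwiner_apply, hz, map_mul, mul_apply_eq_comp, hτ, hτ_id, map_smul, intertwiner_apply]

theorem map_rankOne_intertwiner (hπ : IsFaithfulWithRankOne π) (hfx : f x = 1) (hgy : g y = 1)
    (hσ : σ (hπ.rankOne f x) = g.smulRight y) (φ : StrongDual ℝ X) (z : X) :
    σ (hπ.rankOne φ x) (hπ.intertwiner σ f y z) = φ z • y := by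
  rw [← intertwiner_map_apply, map_rankOne, ContinuousLinearMap.smulRight_apply,
    hπ.intertwiner_smul hfx hgy hσ, intertwiner_apply, hσ, ContinuousLinearMap.smulRight_apply,
    hgy, one_smul]

theorem bijective_intertwiner (hπ : IsFaithfulWithRankOne π) (hσ : IsFaithfulWithRankOne σ)
    (hfx : f x = 1) (hgy : g y = 1) (hσp : σ (hπ.rankOne f x) = g.smulRight y) :
    Function.Bijective (hπ.intertwiner σ f y) := by
  have hy : y ≠ 0 := fun h => by simp [h] at hgy
  refine ⟨(injective_iff_map_eq_zero _).2 fun z hz => ?_, fun v => ⟨π (hσ.rankOne g v) x, ?_⟩⟩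
  · by_contra hz0
    obtain ⟨φ, hφ⟩ := SeparatingDual.exists_eq_one (R := ℝ) hz0
    have := hπ.map_rankOne_intertwiner hfx hgy hσp φ z
    rw [hz, map_zero, hφ, one_smul] at this
    exact hy this.symm
  · rw [intertwiner_map_apply, map_rankOne, intertwiner_apply, hσp]
    simp [hgy]

end

-- Eidelheit's theorem. The inverse of the intertwiner `T` has closed graph because every
-- functional `φ` satisfies `φ (T⁻¹ v) • y = σ (φ ⊗ x) v`.
theorem nonempty_continuousLinearEquiv [CompleteSpace X] [CompleteSpace Y] [Nontrivial X]
    (hπ : IsFaithfulWithRankOne π) (hσ : IsFaithfulWithRankOne σ) : Nonempty (X ≃L[ℝ] Y) := by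
  obtain ⟨x, hx⟩ := exists_ne (0 : X)
  obtain ⟨f, hfx⟩ := SeparatingDual.exists_eq_one (R := ℝ) hx
  obtain ⟨g, y, hgy, hσp⟩ := hπ.exists_map_rankOne_eq_smulRight hσ hfx
  have hy : y ≠ 0 := fun h => by simp [h] at hgy
  let T : X →ₗ[ℝ] Y :=
    { hπ.intertwiner σ f y with map_smul' := hπ.intertwiner_smul hfx hgy hσp }
  let e : X ≃ₗ[ℝ] Y := .ofBijective T (hπ.bijective_intertwiner hσ hfx hgy hσp)
  have he (φ : StrongDual ℝ X) (v : Y) : σ (hπ.rankOne φ x) v = φ (e.symm v) • y := by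
    have hv : hπ.intertwiner σ f y (e.symm v) = v := e.apply_symm_apply v
    rw [← hπ.map_rankOne_intertwiner hfx hgy hσp, hv]
  have hsymm : Continuous e.symm.toLinearMap := by
    refine e.symm.toLinearMap.continuous_of_seq_closed_graph fun u v z hu hz => ?_
    refine (SeparatingDual.eq_iff_forall_dual_eq (R := ℝ)).2 fun φ => smul_left_injective ℝ hy ?_
    refine tendsto_nhds_unique (((φ.continuous.tendsto z).comp hz).smul_const y) ?_
    simpa only [he, Function.comp_def, LinearEquiv.coe_coe] using
      ((σ (hπ.rankOne φ x)).continuous.tendsto v).comp hu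
  exact ⟨(e.symm.toContinuousLinearEquivOfContinuous hsymm).symm⟩

theorem comp_ringEquiv {B : Type*} [NonUnitalNonAssocSemiring B] (hπ : IsFaithfulWithRankOne π)
    (φ : B ≃+* A) : IsFaithfulWithRankOne (π.comp (φ : B →ₙ+* A)) where
  injective := hπ.injective.comp φ.injective
  exists_eq_smulRight f x := ⟨φ.symm (hπ.rankOne f x), by simp [map_rankOne]⟩

end IsFaithfulWithRankOne

theorem isCompactOperator_smulRight (f : StrongDual ℝ X) (y : Y) :
    IsCompactOperator (f.smulRight y) :=
  (isCompactOperator_of_locallyCompactSpace_dom f).clm_comp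
    ((ContinuousLinearMap.id ℝ ℝ).smulRight y)

/-- The canonical representation `(t, a) ↦ t • 1 + a` of the unitization of `K(X)` on `X`. -/
noncomputable def unitizationRep (X : Type*) [NormedAddCommGroup X] [NormedSpace ℝ X] :
    Unitization ℝ (compactOperators ℝ X) →ₙ+* (X →L[ℝ] X) :=
  (NonUnitalSubalgebra.unitization (compactOperators ℝ X)).toRingHom.toNonUnitalRingHom

theorem isFaithfulWithRankOne_unitizationRep (hX : ¬FiniteDimensional ℝ X) :
    IsFaithfulWithRankOne (unitizationRep X) where
  injective := NonUnitalSubalgebra.unitization_injective _ (one_notMem_compactOperators hX)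
  exists_eq_smulRight f x := by
    let a : compactOperators ℝ X := ⟨f.smulRight x, isCompactOperator_smulRight f x⟩
    exact ⟨Unitization.inr a, (NonUnitalSubalgebra.unitization_apply _ _).trans (by simp [a])⟩

theorem nonempty_continuousLinearEquiv_of_ringEquiv_unitization [CompleteSpace X]
    [CompleteSpace Y] (hX : ¬FiniteDimensional ℝ X) (hY : ¬FiniteDimensional ℝ Y)
    (φ : Unitization ℝ (compactOperators ℝ X) ≃+* Unitization ℝ (compactOperators ℝ Y)) :
    Nonempty (X ≃L[ℝ] Y) := by
  have : Nontrivial X := not_subsingleton_iff_nontrivial.1 fun _ => hX inferInstance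
  have hY' := (isFaithfulWithRankOne_unitizationRep hY).comp_ringEquiv φ
  exact (isFaithfulWithRankOne_unitizationRep hX).nonempty_continuousLinearEquiv hY'

end Eidelheit

section Ordinals

universe v

theorem mk_Iic_le_of_lt_ord_succ {κ : Cardinal.{u}} (hκ : ℵ₀ ≤ κ) {α : Ordinal.{u}}
    (hα : α < (Order.succ κ).ord) : #(Iic α) ≤ lift.{u + 1} κ := by
  rw [lt_ord, Order.lt_succ_iff] at hα
  rw [← Set.Iio_add_one_eq_Iic, mk_Iio_ordinal, Cardinal.lift_le, Ordinal.card_add_one]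
  exact add_le_of_le hκ hα (one_le_aleph0.trans hκ)

theorem omega0_opow_lt_ord_succ {κ : Cardinal.{u}} (hκ : ℵ₀ ≤ κ) {θ : Ordinal.{u}}
    (hθ : θ < (Order.succ κ).ord) : Ordinal.omega0 ^ θ < (Order.succ κ).ord := by
  rw [lt_ord, Order.lt_succ_iff] at hθ ⊢
  refine (Ordinal.card_opow_le _ _).trans ?_
  rw [Ordinal.card_omega0]
  exact max_le hκ (max_le hκ hθ)

theorem iSup_lt_ord_succ {κ : Cardinal.{u}} (hκ : ℵ₀ ≤ κ) {ι : Type v}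
    (hι : lift.{u} #ι ≤ lift.{v} κ) {f : ι → Ordinal.{u}} (hf : ∀ i, f i < (Order.succ κ).ord) :
    ⨆ i, f i < (Order.succ κ).ord := by
  refine Ordinal.lift_iSup_lt_of_lt_cof ?_ hf
  rw [← Ordinal.lift_cof, (isRegular_succ hκ).cof_ord, lift_succ]
  exact Order.lt_succ_of_le hι

theorem exists_lt_ord_succ_subset_of_antitone {κ : Cardinal.{u}} {Z : Type v}
    (hZ : lift.{u} #Z ≤ lift.{v} κ) {Q : Ordinal.{u} → Set Z} (hQ : Antitone Q) :
    ∃ θ < (Order.succ κ).ord, Q θ ⊆ Q (θ + 1) := by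
  by_contra! h
  choose z hz hz' using fun θ : Iio (Order.succ κ).ord => not_subset.1 (h θ θ.2)
  have hinj : Function.Injective z := .of_lt_imp_ne fun θ θ' hlt heq =>
    hz' θ (heq ▸ hQ (Order.add_one_le_of_lt hlt) (hz θ'))
  have hle := lift_mk_le_lift_mk_of_injective hinj
  rw [mk_Iio_ordinal, card_ord, lift_lift] at hle
  have hZ' := Cardinal.lift_le.{u + 1}.2 hZ
  rw [lift_lift, lift_lift] at hZ'
  exact (lift_lt.{_, max v (u + 1)}.2 (Order.lt_succ κ)).not_ge (hle.trans hZ')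

theorem exists_lt_omega0_opow_dvd_of_mem_nhds {α θ : Ordinal.{u}} {β : Iic α}
    (hβ : (β : Ordinal) ≠ 0) (hdvd : Ordinal.omega0 ^ (θ + 1) ∣ (β : Ordinal)) {V : Set (Iic α)}
    (hV : V ∈ 𝓝 β) :
    ∃ β' ∈ V, β' < β ∧ (β' : Ordinal) ≠ 0 ∧ Ordinal.omega0 ^ θ ∣ (β' : Ordinal) := by
  have hbot : (⟨0, mem_Iic.2 zero_le⟩ : Iic α) < β := pos_iff_ne_zero.2 hβ
  obtain ⟨γ, hγβ, hγV⟩ := exists_Ioc_subset_of_mem_nhds hV ⟨_, hbot⟩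
  obtain ⟨δ, hδ⟩ := hdvd
  rw [Ordinal.opow_add, Ordinal.opow_one, mul_assoc] at hδ
  have hδ0 : 0 < δ := pos_iff_ne_zero.2 fun h => hβ (by simp [hδ, h])
  have hlim : Order.IsSuccLimit (Ordinal.omega0 * δ) :=
    Ordinal.isSuccLimit_mul_left Ordinal.isSuccLimit_omega0 hδ0
  have hγδ : (γ : Ordinal) < Ordinal.omega0 ^ θ * (Ordinal.omega0 * δ) :=
    hδ ▸ Subtype.coe_lt_coe.2 hγβ
  obtain ⟨η, hη, hγη⟩ := (Ordinal.lt_mul_iff_of_isSuccLimit hlim).1 hγδ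
  have hηβ : Ordinal.omega0 ^ θ * η < β :=
    hδ ▸ mul_lt_mul_of_pos_left hη (Ordinal.opow_pos _ Ordinal.omega0_pos)
  let β' : Iic α := ⟨Ordinal.omega0 ^ θ * η, hηβ.le.trans β.2⟩
  have hβ'β : β' < β := hηβ
  exact ⟨β', hγV ⟨hγη, hβ'β.le⟩, hβ'β, (zero_le.trans_lt hγη).ne', dvd_mul_right _ _⟩

end Ordinals

section HighRank

universe v

theorem continuous_toWeakDual_pointEval_comp {K X : Type*} [TopologicalSpace K] [CompactSpace K]
    [NormedAddCommGroup X] [NormedSpace ℝ X] (T : X →L[ℝ] C(K, ℝ)) :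
    Continuous fun t : K => StrongDual.toWeakDual (pointEval t ∘L T) :=
  WeakDual.continuous_of_continuous_eval fun x => (T x).continuous

theorem one_le_norm_symm_mul_norm_pointEval_comp_sub {K X : Type*} [LinearOrder K]
    [WellFoundedLT K] [TopologicalSpace K] [OrderTopology K] [CompactSpace K]
    [NormedAddCommGroup X] [NormedSpace ℝ X] (T : X ≃L[ℝ] C(K, ℝ)) {s t : K} (hst : s < t) :
    1 ≤ ‖(T.symm : C(K, ℝ) →L[ℝ] X)‖ *
      ‖pointEval s ∘L (T : X →L[ℝ] C(K, ℝ)) - pointEval t ∘L (T : X →L[ℝ] C(K, ℝ))‖ := by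
  let ν := pointEval s ∘L (T : X →L[ℝ] C(K, ℝ)) - pointEval t ∘L (T : X →L[ℝ] C(K, ℝ))
  let e : C(K, ℝ) := iicIndicator (s : WithBot K)
  have hν : ν (T.symm e) = 1 := by
    simp [ν, e, pointEval_apply, iicIndicator_of_le le_rfl,
      iicIndicator_of_lt (WithBot.coe_lt_coe.2 hst)]
  calc (1 : ℝ) ≤ ‖ν‖ * ‖T.symm e‖ := by simpa [hν] using ν.le_opNorm (T.symm e)
    _ ≤ ‖ν‖ * (‖(T.symm : C(K, ℝ) →L[ℝ] X)‖ * 1) := by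
      gcongr
      exact (T.symm : C(K, ℝ) →L[ℝ] X).le_opNorm_of_le (norm_iicIndicator_le _)
    _ = ‖(T.symm : C(K, ℝ) →L[ℝ] X)‖ * ‖ν‖ := by ring

variable {X : Type v} [NormedAddCommGroup X] [NormedSpace ℝ X]

/-- The functionals on `X` that become evaluation at a nonzero multiple of `ω ^ θ`, that is, at a
point of Cantor–Bendixson rank at least `θ`, under some isomorphism of `X` with some `C([0, α], ℝ)`
bounded by `N` in both directions. -/
def highRankEvals (X : Type v) [NormedAddCommGroup X] [NormedSpace ℝ X] (N : ℝ)
    (θ : Ordinal.{u}) : Set (StrongDual ℝ X) :=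
  {μ | ∃ (α : Ordinal.{u}) (T : X ≃L[ℝ] C(Iic α, ℝ)) (β : Iic α),
    ‖(T : X →L[ℝ] C(Iic α, ℝ))‖ ≤ N ∧ ‖(T.symm : C(Iic α, ℝ) →L[ℝ] X)‖ ≤ N ∧
    (β : Ordinal) ≠ 0 ∧ Ordinal.omega0 ^ θ ∣ (β : Ordinal) ∧
    μ = pointEval β ∘L (T : X →L[ℝ] C(Iic α, ℝ))}

theorem antitone_highRankEvals (N : ℝ) :
    Antitone (highRankEvals X N : Ordinal.{u} → Set (StrongDual ℝ X)) := by
  rintro θ θ' hle μ ⟨α, T, β, hT, hT', hβ, hdvd, hμ⟩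
  exact ⟨α, T, β, hT, hT', hβ, (Ordinal.opow_dvd_opow _ hle).trans hdvd, hμ⟩

theorem isBounded_highRankEvals (N : ℝ) (θ : Ordinal.{u}) :
    Bornology.IsBounded (highRankEvals X N θ) := by
  refine isBounded_iff_forall_norm_le.2 ⟨N, ?_⟩
  rintro - ⟨α, T, β, hT, -, -, -, rfl⟩
  calc ‖pointEval β ∘L (T : X →L[ℝ] C(Iic α, ℝ))‖
      ≤ ‖pointEval β‖ * ‖(T : X →L[ℝ] C(Iic α, ℝ))‖ := ContinuousLinearMap.opNorm_comp_le _ _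
    _ ≤ 1 * N := by gcongr; exact norm_pointEval_le β
    _ = N := one_mul N

theorem highRankEvals_eq_empty_of_subset (hX : HasFragmentableDual X) {N : ℝ} {θ : Ordinal.{u}}
    (hθ : highRankEvals X N θ ⊆ highRankEvals X N (θ + 1)) : highRankEvals X N θ = ∅ := by
  by_contra! hne
  obtain ⟨ε, hε, hNε⟩ := exists_pos_mul_lt one_pos N
  obtain ⟨U, hU, ⟨μ, hμ, hμU⟩, hdiam⟩ := hX _ hne (isBounded_highRankEvals N θ) ε hε
  obtain ⟨α, T, β, hT, hT', hβ, hdvd, rfl⟩ := hθ hμ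
  obtain ⟨β', hβ'U, hβ'β, hβ', hdvd'⟩ := exists_lt_omega0_opow_dvd_of_mem_nhds hβ hdvd
    ((hU.preimage (continuous_toWeakDual_pointEval_comp (T : X →L[ℝ] C(Iic α, ℝ)))).mem_nhds hμU)
  have hsep := one_le_norm_symm_mul_norm_pointEval_comp_sub T hβ'β
  have hclose := hdiam _ ⟨⟨α, T, β', hT, hT', hβ', hdvd', rfl⟩, hβ'U⟩ _ ⟨hμ, hμU⟩
  have hN : 0 ≤ N := (norm_nonneg (T.symm : C(Iic α, ℝ) →L[ℝ] X)).trans hT'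
  exact (hsep.trans (mul_le_mul hT' hclose (norm_nonneg _) hN)).not_gt hNε

-- Pass to a level `θ` at which all the antitone families `highRankEvals X n` have stabilised.
theorem exists_lt_ord_succ_forall_isEmpty_continuousLinearEquiv {κ : Cardinal.{u}} (hκ : ℵ₀ ≤ κ)
    (hX : HasFragmentableDual X) (hcard : lift.{u} #(StrongDual ℝ X) ≤ lift.{v} κ) :
    ∃ θ < (Order.succ κ).ord, ∀ α ≥ θ, IsEmpty (X ≃L[ℝ] C(Iic α, ℝ)) := by
  have hstab (n : ℕ) : ∃ θ < (Order.succ κ).ord, highRankEvals X n θ = ∅ :=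
    let ⟨θ, hθ, hsub⟩ := exists_lt_ord_succ_subset_of_antitone hcard (antitone_highRankEvals n)
    ⟨θ, hθ, highRankEvals_eq_empty_of_subset hX hsub⟩
  choose θ hθ hempty using hstab
  have hsup : ⨆ n, θ n < (Order.succ κ).ord := iSup_lt_ord_succ hκ (by simpa using hκ) hθ
  refine ⟨_, omega0_opow_lt_ord_succ hκ hsup, fun α hα => ⟨fun T => ?_⟩⟩
  obtain ⟨n, hn⟩ := exists_nat_ge
    (max ‖(T : X →L[ℝ] C(Iic α, ℝ))‖ ‖(T.symm : C(Iic α, ℝ) →L[ℝ] X)‖)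
  have hmem := antitone_highRankEvals (X := X) n (Ordinal.le_iSup θ n)
    ⟨α, T, ⟨_, hα⟩, (le_max_left _ _).trans hn, (le_max_right _ _).trans hn,
      (Ordinal.opow_pos _ Ordinal.omega0_pos).ne', dvd_rfl, rfl⟩
  exact notMem_empty _ (hempty n ▸ hmem)

end HighRank

section DenseFamilies

theorem nonempty_isometryEquiv_of_dist_eq {Λ E F : Type*} [MetricSpace E] [CompleteSpace E]
    [MetricSpace F] [CompleteSpace F] {d : Λ → E} {d' : Λ → F} (hd : DenseRange d)
    (hd' : DenseRange d') (h : ∀ i j, dist (d i) (d j) = dist (d' i) (d' j)) :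
    Nonempty (E ≃ᵢ F) := by
  let _ : PseudoMetricSpace Λ := PseudoMetricSpace.induced d inferInstance
  have hd_iso : Isometry d := Isometry.of_dist_eq fun _ _ => rfl
  have hd'_iso : Isometry d' := Isometry.of_dist_eq fun i j => (h i j).symm
  let complE : AbstractCompletion Λ := ⟨E, d, inferInstance, inferInstance, inferInstance,
    hd_iso.isUniformInducing, hd⟩
  let complF : AbstractCompletion Λ := ⟨F, d', inferInstance, inferInstance, inferInstance,
    hd'_iso.isUniformInducing, hd'⟩
  let e : E ≃ᵤ F := complE.compareEquiv complF
  have he (i : Λ) : e (d i) = d' i := complE.compare_coe complF i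
  have hec : Continuous e := e.continuous
  have he_iso : Isometry e := Isometry.of_dist_eq fun x y => by
    refine hd.induction_on₂ (p := fun x y => dist (e x) (e y) = dist x y) ?_ ?_ x y
    · exact isClosed_eq (by fun_prop) (by fun_prop)
    · intro i j
      rw [he, he, h]
  exact ⟨⟨e.toEquiv, he_iso⟩⟩

theorem exists_denseRange_of_mk_le {Λ E : Type u} [TopologicalSpace E] [Nonempty E] {D : Set E}
    (hD : Dense D) (hcard : #D ≤ #Λ) : ∃ d : Λ → E, DenseRange d := by
  obtain ⟨f⟩ : Nonempty (D ↪ Λ) := hcard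
  have : Nonempty D := hD.nonempty.to_subtype
  refine ⟨fun i => (Function.invFun f i : D), hD.mono fun x hx => ⟨f ⟨x, hx⟩, ?_⟩⟩
  exact congrArg Subtype.val (Function.leftInverse_invFun f.injective ⟨x, hx⟩)

theorem mk_prod_self_arrow_real_le (Λ : Type u) (h : ℵ₀ ≤ #Λ) : #(Λ × Λ → ℝ) ≤ 2 ^ #Λ := by
  rw [mk_arrow, mk_prod, mk_real, lift_uzero, lift_id, lift_continuum, mul_eq_self h,
    ← two_power_aleph0, ← power_mul, aleph0_mul_eq h]

end DenseFamilies

section Calkin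

variable {𝕜 E F : Type*} [NontriviallyNormedField 𝕜] [NormedAddCommGroup E] [NormedSpace 𝕜 E]
  [NormedAddCommGroup F] [NormedSpace 𝕜 F]

theorem mem_compactIdeal {f : E →L[𝕜] E} : f ∈ compactIdeal 𝕜 E ↔ IsCompactOperator f :=
  TwoSidedIdeal.mem_mk' _ _ _ _ _ _ _

theorem isCompactOperator_conjContinuousAlgEquiv_iff (e : E ≃L[𝕜] F) {f : E →L[𝕜] E} :
    IsCompactOperator (e.conjContinuousAlgEquiv f) ↔ IsCompactOperator f := by
  refine ⟨fun h => ?_, fun h => (h.comp_clm (e.symm : F →L[𝕜] E)).clm_comp (e : E →L[𝕜] F)⟩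
  have hf : ⇑f = ⇑(e.symm : F →L[𝕜] E) ∘ ⇑(e.conjContinuousAlgEquiv f) ∘ ⇑(e : E →L[𝕜] F) := by
    funext x
    simp
  rw [hf]
  exact (h.comp_clm (e : E →L[𝕜] F)).clm_comp (e.symm : F →L[𝕜] E)

theorem nonempty_ringEquiv_calkin (e : E ≃L[𝕜] F) : Nonempty (Calkin 𝕜 E ≃+* Calkin 𝕜 F) := by
  refine ⟨RingCon.congr e.conjContinuousAlgEquiv.toAlgEquiv.toRingEquiv ?_⟩
  ext x y
  rw [RingCon.comap_rel, TwoSidedIdeal.rel_iff, TwoSidedIdeal.rel_iff, mem_compactIdeal,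
    mem_compactIdeal, ← map_sub]
  exact (isCompactOperator_conjContinuousAlgEquiv_iff e).symm

end Calkin

section Main

variable {κ : Cardinal.{u}}

theorem not_finiteDimensional_continuousMap_Iic {α : Ordinal.{u}} (hα : Ordinal.omega0 ≤ α) :
    ¬FiniteDimensional ℝ C(Iic α, ℝ) := fun _ =>
  have hinf : (Iic α).Infinite := infinite_of_injective_forall_mem
    (f := fun n : ℕ => (n : Ordinal)) Nat.cast_injective
    fun n => (Ordinal.natCast_lt_omega0 n).le.trans hα
  hinf (finite_of_finiteDimensional_continuousMap (Iic α))

theorem exists_lt_ord_succ_forall_isEmpty_ringEquiv (h𝔠 : 𝔠 ≤ κ) (hκ : κ ^ ℵ₀ ≤ κ)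
    (B : Type*) [Mul B] [Add B] :
    ∃ θ < (Order.succ κ).ord, ∀ α ∈ Ico θ (Order.succ κ).ord,
      IsEmpty (Unitization ℝ (compactOperators ℝ C(Iic α, ℝ)) ≃+* B) := by
  have hκ₀ : ℵ₀ ≤ κ := aleph0_le_continuum.trans h𝔠
  have hω : Ordinal.omega0 < (Order.succ κ).ord :=
    lt_ord.2 (by simpa using hκ₀)
  by_cases hB : ∀ α ∈ Ico Ordinal.omega0 (Order.succ κ).ord,
      IsEmpty (Unitization ℝ (compactOperators ℝ C(Iic α, ℝ)) ≃+* B)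
  · exact ⟨_, hω, hB⟩
  push Not at hB
  obtain ⟨α₀, ⟨hωα₀, hα₀⟩, ⟨φ₀⟩⟩ := hB
  have hdual : #(StrongDual ℝ C(Iic α₀, ℝ)) ≤ lift.{u + 1} κ := mk_strongDual_continuousMap_le
    (by simpa using h𝔠) (by simpa using Cardinal.lift_le.2 hκ) (mk_Iic_le_of_lt_ord_succ hκ₀ hα₀)
  obtain ⟨θ, hθ, hempty⟩ := exists_lt_ord_succ_forall_isEmpty_continuousLinearEquiv hκ₀
    (hasFragmentableDual_continuousMap (K := Iic α₀)) (by rw [lift_id'.{u, u + 1}]; exact hdual)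
  refine ⟨max θ Ordinal.omega0, max_lt hθ hω, fun α hα => ⟨fun φ => ?_⟩⟩
  obtain ⟨T⟩ := nonempty_continuousLinearEquiv_of_ringEquiv_unitization
    (not_finiteDimensional_continuousMap_Iic hωα₀)
    (not_finiteDimensional_continuousMap_Iic ((le_max_right _ _).trans hα.1)) (φ₀.trans φ.symm)
  exact (hempty α ((le_max_left _ _).trans hα.1)).false T

-- A Banach space is determined up to isomorphism by the distances in a dense family.
theorem exists_lt_ord_succ_forall_isEmpty_ringEquiv_calkin (h𝔠 : 𝔠 ≤ κ) (hκ : κ ^ ℵ₀ ≤ κ)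
    {Λ : Type*} (z : Λ × Λ → ℝ) :
    ∃ θ < (Order.succ κ).ord, ∀ α ∈ Ico θ (Order.succ κ).ord,
      ∀ (E : Type v) [NormedAddCommGroup E] [NormedSpace ℝ E] [CompleteSpace E] (d : Λ → E),
        DenseRange d → (∀ i j, dist (d i) (d j) = z (i, j)) →
        IsEmpty (Unitization ℝ (compactOperators ℝ C(Iic α, ℝ)) ≃+* Calkin ℝ E) := by
  by_cases hz : ∃ (E : Type v) (_ : NormedAddCommGroup E) (_ : NormedSpace ℝ E)
      (_ : CompleteSpace E) (d : Λ → E), DenseRange d ∧ ∀ i j, dist (d i) (d j) = z (i, j)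
  · obtain ⟨E₀, _, _, _, d₀, hd₀, hz₀⟩ := hz
    obtain ⟨θ, hθ, hempty⟩ := exists_lt_ord_succ_forall_isEmpty_ringEquiv h𝔠 hκ (Calkin ℝ E₀)
    refine ⟨θ, hθ, fun α hα E _ _ _ d hd hz => ⟨fun φ => ?_⟩⟩
    obtain ⟨e⟩ := nonempty_isometryEquiv_of_dist_eq hd hd₀ fun i j => (hz i j).trans (hz₀ i j).symm
    obtain ⟨ψ⟩ := nonempty_ringEquiv_calkin e.toRealLinearIsometryEquiv.toContinuousLinearEquiv
    exact (hempty α hα).false (φ.trans ψ)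
  · have hpos : 0 < (Order.succ κ).ord := ord_pos.2 (Order.bot_lt_succ κ)
    exact ⟨0, hpos, fun α _ E _ _ _ d hd hdz => (hz ⟨E, ‹_›, ‹_›, ‹_›, d, hd, hdz⟩).elim⟩

end Main

/-- For every infinite cardinal `λ` there exists an ordinal `α` such that the unitization over
`ℝ` of the non-unital Banach algebra `K(C([0,α],ℝ))` of compact operators on the Banach space
`C([0,α],ℝ)` has a dense subset of cardinality at most `2 ^ λ` and, for every real Banach space
`E` having a dense subset of cardinality at most `λ`, this unitization is not isomorphic as a
ring to the Calkin algebra `B(E)/K(E)`. -/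
theorem statement5 (lam : Cardinal.{u}) (hlam : Cardinal.aleph0 ≤ lam) :
    ∃ α : Ordinal.{u},
      (∃ D : Set (Unitization ℝ (compactOperators ℝ C(Set.Iic α, ℝ))),
        Dense D ∧ #D ≤ Cardinal.lift.{u + 1} (2 ^ lam)) ∧
      ∀ (E : Type u) [NormedAddCommGroup E] [NormedSpace ℝ E] [CompleteSpace E],
        (∃ D : Set E, Dense D ∧ #D ≤ lam) →
        IsEmpty ((Unitization ℝ (compactOperators ℝ C(Set.Iic α, ℝ))) ≃+* Calkin ℝ E) := by
  have h𝔠 : 𝔠 ≤ 2 ^ lam := two_power_aleph0 ▸ power_le_power_left two_ne_zero hlam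
  have hκ₀ : ℵ₀ ≤ 2 ^ lam := aleph0_le_continuum.trans h𝔠
  have hκ : ((2 : Cardinal.{u}) ^ lam) ^ ℵ₀ ≤ 2 ^ lam := by rw [← power_mul, mul_aleph0_eq hlam]
  choose θ hθ hempty using
    exists_lt_ord_succ_forall_isEmpty_ringEquiv_calkin.{u, u} h𝔠 hκ (Λ := lam.out)
  have hz : #(lam.out × lam.out → ℝ) ≤ 2 ^ lam := by
    simpa using mk_prod_self_arrow_real_le lam.out (by simpa using hlam)
  have hα := iSup_lt_ord_succ hκ₀ (Cardinal.lift_le.2 hz) hθ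
  refine ⟨⨆ z, θ z, ⟨Set.univ, dense_univ, ?_⟩, fun E _ _ _ ⟨D, hD, hDcard⟩ => ?_⟩
  · rw [mk_univ]
    exact mk_unitization_compactOperators_le (continuum_le_lift.2 h𝔠)
      (by simpa only [lift_power, lift_aleph0] using Cardinal.lift_le.{u + 1}.2 hκ)
      (mk_Iic_le_of_lt_ord_succ hκ₀ hα)
  · obtain ⟨d, hd⟩ := exists_denseRange_of_mk_le (Λ := lam.out) hD (by rwa [mk_out])
    exact hempty (fun p => dist (d p.1) (d p.2)) _ ⟨Ordinal.le_iSup θ _, hα⟩ E d hd fun _ _ => rfl
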